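/- A Cayley graph Cay(G,T), where T ⊆ G satisfies 1_G ∉ T and T = T^{(-1)}, is a (v,k,λ,μ)-strongly regular graph if and only if T is a regular (v,k,λ,μ)-partial difference set in G. -/

import Mathlib

open Finset Pointwise

def IsPDS {G : Type*} [Group G] [Fintype G] [DecidableEq G]
    (T : Finset G) (v k : ℕ) (l m : ℤ) : Prop :=
  Fintype.card G = v ∧ T.card = k ∧
    ∀ g : G, g ≠ 1 →
      ((((T ×ˢ T).filter fun p => p.1 ≠ p.2 ∧ p.1 * p.2⁻¹ = g)).card : ℤ) =
        if g ∈ T then l else m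

/-- The Cayley graph of `G` with connection set `T`: for `T` with `1 ∉ T` and `T⁻¹ = T`,
vertices `x` and `y` are adjacent iff `x * y⁻¹ ∈ T`. -/
def Cay {G : Type*} [Group G] [DecidableEq G] (T : Finset G) : SimpleGraph G :=
  SimpleGraph.fromRel (fun x y => x * y⁻¹ ∈ T)

instance {G : Type*} [Group G] [DecidableEq G] (T : Finset G) :
    DecidableRel (Cay T).Adj :=
  fun x y => decidable_of_iff (x ≠ y ∧ (x * y⁻¹ ∈ T ∨ y * x⁻¹ ∈ T)) Iff.rfl

theorem cay_adj_iff {G : Type*} [Group G] [DecidableEq G]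
    (T : Finset G) (hone : (1 : G) ∉ T) (hrev : T⁻¹ = T) (x y : G) :
    (Cay T).Adj x y ↔ x * y⁻¹ ∈ T := by
  have hinv : ∀ g : G, g⁻¹ ∈ T → g ∈ T := by
    intro g hg
    rw [← hrev]
    exact Finset.mem_inv'.mpr hg
  unfold Cay
  rw [SimpleGraph.fromRel_adj]
  constructor
  · rintro ⟨_, h | h⟩
    · exact h
    · apply hinv
      simpa using h
  · intro h
    refine ⟨?_, Or.inl h⟩
    rintro rfl
    exact hone (by simpa using h)

theorem cay_common {G : Type*} [Group G] [Fintype G] [DecidableEq G]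
    (T : Finset G) (hone : (1 : G) ∉ T) (hrev : T⁻¹ = T) (x y : G) (hxy : x ≠ y) :
    Fintype.card ((Cay T).commonNeighbors x y) =
      ((T ×ˢ T).filter fun p => p.1 ≠ p.2 ∧ p.1 * p.2⁻¹ = x * y⁻¹).card := by
  rw [← Set.toFinset_card]
  refine Finset.card_bij' (fun z _ => (x * z⁻¹, y * z⁻¹)) (fun p _ => p.1⁻¹ * x) ?_ ?_ ?_ ?_
  · intro z hz
    simp only [Set.mem_toFinset, SimpleGraph.mem_commonNeighbors, cay_adj_iff T hone hrev] at hz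
    simp [hz.1, hz.2, hxy]
  · rintro ⟨a, b⟩ hp
    simp only [Finset.mem_filter, Finset.mem_product] at hp
    obtain ⟨⟨ha, hb⟩, _, h⟩ := hp
    simp only [Set.mem_toFinset, SimpleGraph.mem_commonNeighbors, cay_adj_iff T hone hrev]
    have hb' : y * (a⁻¹ * x)⁻¹ = b := by
      have : a = x * y⁻¹ * b := by rw [← h]; group
      rw [this]; group
    rw [hb']
    exact ⟨by simpa using ha, hb⟩
  · intro z _
    simp
  · rintro ⟨a, b⟩ hp
    simp only [Finset.mem_filter, Finset.mem_product] at hp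
    obtain ⟨_, _, h⟩ := hp
    have : a = x * y⁻¹ * b := by rw [← h]; group
    ext
    · simp
    · simp only [this]; group

theorem cay_degree {G : Type*} [Group G] [Fintype G] [DecidableEq G]
    (T : Finset G) (hone : (1 : G) ∉ T) (hrev : T⁻¹ = T) (x : G) :
    (Cay T).degree x = T.card := by
  rw [← SimpleGraph.card_neighborFinset_eq_degree]
  refine Finset.card_bij' (fun z _ => x * z⁻¹) (fun p _ => p⁻¹ * x) ?_ ?_ ?_ ?_
  · intro z hz
    simpa [cay_adj_iff T hone hrev] using hz
  · intro z hz
    simpa [cay_adj_iff T hone hrev] using hz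
  · intro z _
    simp
  · intro z _
    simp

theorem cayley_srg_iff_pds {G : Type*} [Group G] [Fintype G] [DecidableEq G]
    (T : Finset G) (hone : (1 : G) ∉ T) (hrev : T⁻¹ = T)
    (v k : ℕ) (l m : ℕ) :
    (Cay T).IsSRGWith v k l m ↔ IsPDS T v k (l : ℤ) (m : ℤ) := by
  constructor
  · intro h
    refine ⟨h.card, ?_, ?_⟩
    · rw [← cay_degree T hone hrev 1]
      exact h.regular 1
    · intro g hg
      have hc := cay_common T hone hrev g 1 hg
      have ha := cay_adj_iff T hone hrev g 1
      simp only [inv_one, mul_one] at hc ha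
      rw [← hc]
      split_ifs with hT
      · rw [h.of_adj g 1 (ha.2 hT)]
      · rw [h.of_not_adj hg (fun h' => hT (ha.1 h'))]
  · rintro ⟨h1, h2, h3⟩
    refine ⟨h1, fun x => (cay_degree T hone hrev x).trans h2, ?_, ?_⟩
    · intro x y hxy
      have hne := hxy.ne
      have := h3 (x * y⁻¹) (by rwa [ne_eq, mul_inv_eq_one])
      rw [cay_adj_iff T hone hrev] at hxy
      rw [if_pos hxy] at this
      rw [cay_common T hone hrev x y hne]
      exact_mod_cast this
    · intro x y hne hxy
      have := h3 (x * y⁻¹) (by rwa [ne_eq, mul_inv_eq_one])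
      rw [cay_adj_iff T hone hrev] at hxy
      rw [if_neg hxy] at this
      rw [cay_common T hone hrev x y hne]
      exact_mod_cast this
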